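/- For lazy random walk on a finite connected graph G with n ≥ 2 vertices, the relaxation time satisfies t_rel ≤ max_{x,y} (E_x[τ_y] + E_y[τ_x]) ≤ 6 (d_avg/d_min) n² − 4. -/

import Mathlib

open Finset

variable {V : Type*}

noncomputable def pip [Fintype V] (pi f g : V → ℝ) : ℝ := ∑ x, pi x * f x * g x

noncomputable def secondEig [Fintype V] (pi : V → ℝ) (P : Matrix V V ℝ) : ℝ :=
  sSup {r : ℝ | ∃ f : V → ℝ, pip pi f f = 1 ∧ (∑ x, pi x * f x) = 0 ∧ r = pip pi f (P.mulVec f)}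

noncomputable def trelT [Fintype V] (pi : V → ℝ) (P : Matrix V V ℝ) : ℝ := 1 / (1 - secondEig pi P)

noncomputable def Dmat [Fintype V] [DecidableEq V] (h : V) : Matrix V V ℝ :=
  Matrix.diagonal fun y => if y = h then 0 else 1

noncomputable def opNorm [Fintype V] (pi : V → ℝ) (A : Matrix V V ℝ) : ℝ :=
  sSup {r : ℝ | ∃ f : V → ℝ, pip pi f f ≤ 1 ∧ r = Real.sqrt (pip pi (A.mulVec f) (A.mulVec f))}

/-- probability, starting at `y`, that the chain avoids `x` during steps `0..t`
(i.e. `P_y(τ_x > t)`), written as a sum over length-`t` paths. -/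
noncomputable def survProb [Fintype V] [DecidableEq V] (P : Matrix V V ℝ) (x y : V) (t : ℕ) : ℝ :=
  ∑ p : Fin (t+1) → V,
    if p 0 = y ∧ (∀ s, p s ≠ x) then ∏ s : Fin t, P (p s.castSucc) (p s.succ) else 0

/-- `Ehit P x y = E_y[τ_x]`, via `E[τ] = ∑_t P(τ > t)`. -/
noncomputable def Ehit [Fintype V] [DecidableEq V] (P : Matrix V V ℝ) (x y : V) : ℝ :=
  ∑' t : ℕ, survProb P x y t

noncomputable def thit [Fintype V] [DecidableEq V] (P : Matrix V V ℝ) : ℝ :=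
  ⨆ q : V × V, Ehit P q.1 q.2

/-- expected hitting time of `x` when the initial state has law `μ`. -/
noncomputable def EhitFrom [Fintype V] [DecidableEq V] (P : Matrix V V ℝ) (μ : V → ℝ) (x : V) : ℝ :=
  ∑' t : ℕ, ∑ y, μ y * survProb P x y t

/-- probability, starting from `pi`, that `X_s ≠ h s` for all `0 ≤ s ≤ t`. -/
noncomputable def avoidProb [Fintype V] [DecidableEq V] (pi : V → ℝ) (P : Matrix V V ℝ)
    (t : ℕ) (h : Fin (t+1) → V) : ℝ :=
  ∑ p : Fin (t+1) → V,
    if ∀ s, p s ≠ h s then pi (p 0) * ∏ s : Fin t, P (p s.castSucc) (p s.succ) else 0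

/-- expected number of visits to `x` strictly before hitting `A`, started at `x`. -/
noncomputable def visitsBeforeHit [Fintype V] [DecidableEq V] (P : Matrix V V ℝ)
    (A : Finset V) (x : V) : ℝ :=
  ∑' t : ℕ, ∑ p : Fin (t+1) → V,
    if p 0 = x ∧ p (Fin.last t) = x ∧ (∀ s, p s ∉ A) then
      ∏ s : Fin t, P (p s.castSucc) (p s.succ) else 0

noncomputable def lazyP [Fintype V] [DecidableEq V] (G : SimpleGraph V) [DecidableRel G.Adj] :
    Matrix V V ℝ :=
  Matrix.of fun x y => if x = y then 1/2 else if G.Adj x y then 1/(2 * (G.degree x : ℝ)) else 0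

noncomputable def lazyPi [Fintype V] [DecidableEq V] (G : SimpleGraph V) [DecidableRel G.Adj] :
    V → ℝ :=
  fun x => (G.degree x : ℝ) / ∑ v, (G.degree v : ℝ)

noncomputable def dminR [Fintype V] [Nonempty V] [DecidableEq V] (G : SimpleGraph V)
    [DecidableRel G.Adj] : ℝ :=
  Finset.univ.inf' Finset.univ_nonempty fun v => (G.degree v : ℝ)

noncomputable def davgR [Fintype V] [DecidableEq V] (G : SimpleGraph V) [DecidableRel G.Adj] : ℝ :=
  (∑ v, (G.degree v : ℝ)) / Fintype.card V

noncomputable def Pstar [Fintype V] [DecidableEq V] (pi : V → ℝ) (γ : ℝ) : Matrix V V ℝ :=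
  Matrix.of fun x y => (1 - γ) * (if x = y then 1 else 0) + γ * pi y

/-- The combinatorial Laplacian `∑_{v ∼ u} (f u - f v)` of a graph. -/
noncomputable def graphLap [Fintype V] (G : SimpleGraph V) [DecidableRel G.Adj]
    (f : V → ℝ) (u : V) : ℝ :=
  ∑ v, if G.Adj u v then f u - f v else 0

/-- The Dirichlet form `½ ∑_{u ∼ v} (f u - f v) (g u - g v)` of a graph. -/
noncomputable def graphEnergy [Fintype V] (G : SimpleGraph V) [DecidableRel G.Adj]
    (f g : V → ℝ) : ℝ :=
  1 / 2 * ∑ u, ∑ v, if G.Adj u v then (f u - f v) * (g u - g v) else 0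

theorem sum_mul_graphLap [Fintype V] (G : SimpleGraph V) [DecidableRel G.Adj] (f g : V → ℝ) :
    ∑ u, f u * graphLap G g u = graphEnergy G f g := by
  have h1 : ∑ u, f u * graphLap G g u =
      ∑ u, ∑ v, if G.Adj u v then f u * (g u - g v) else 0 := by
    simp only [graphLap, Finset.mul_sum, mul_ite, mul_zero]
  have h2 : ∑ u, f u * graphLap G g u =
      ∑ u, ∑ v, if G.Adj u v then f v * (g v - g u) else 0 := by
    rw [h1, Finset.sum_comm]
    simp only [G.adj_comm]
  have h3 : ∑ u, ∑ v, (if G.Adj u v then (f u - f v) * (g u - g v) else 0) =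
      (∑ u, ∑ v, if G.Adj u v then f u * (g u - g v) else 0) +
        ∑ u, ∑ v, if G.Adj u v then f v * (g v - g u) else 0 := by
    simp only [← Finset.sum_add_distrib]
    refine Finset.sum_congr rfl fun u _ => Finset.sum_congr rfl fun v _ => ?_
    split_ifs <;> ring
  rw [graphEnergy, h3, ← h1, ← h2]
  ring

theorem sum_graphLap [Fintype V] (G : SimpleGraph V) [DecidableRel G.Adj] (g : V → ℝ) :
    ∑ u, graphLap G g u = 0 := by
  simpa [graphEnergy] using sum_mul_graphLap G (fun _ => 1) g

theorem graphLap_sub [Fintype V] (G : SimpleGraph V) [DecidableRel G.Adj] (f g : V → ℝ) (u : V) :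
    graphLap G (fun v => f v - g v) u = graphLap G f u - graphLap G g u := by
  simp only [graphLap, ← Finset.sum_sub_distrib]
  refine Finset.sum_congr rfl fun v _ => ?_
  split_ifs <;> ring

theorem graphEnergy_sq_le [Fintype V] (G : SimpleGraph V) [DecidableRel G.Adj] (f g : V → ℝ) :
    graphEnergy G f g ^ 2 ≤ graphEnergy G f f * graphEnergy G g g := by
  have h := Finset.sum_mul_sq_le_sq_mul_sq (Finset.univ : Finset (V × V))
    (fun p => if G.Adj p.1 p.2 then f p.1 - f p.2 else 0)
    (fun p => if G.Adj p.1 p.2 then g p.1 - g p.2 else 0)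
  simp only [Fintype.sum_prod_type, ite_mul, mul_ite, mul_zero, zero_mul, pow_two,
    ← ite_and, and_self] at h
  have key : ∀ a b : V → ℝ, (∑ x, ∑ y, if G.Adj x y then (a x - a y) * (b x - b y) else 0) =
      2 * graphEnergy G a b := by
    intro a b
    rw [graphEnergy]
    ring
  simp only [key] at h
  nlinarith [h]

theorem graphEnergy_nonneg [Fintype V] (G : SimpleGraph V) [DecidableRel G.Adj] (f : V → ℝ) :
    0 ≤ graphEnergy G f f := by
  refine mul_nonneg (by norm_num) (Finset.sum_nonneg fun u _ => Finset.sum_nonneg fun v _ => ?_)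
  split_ifs
  · exact mul_self_nonneg _
  · exact le_rfl

theorem sq_sub_le_graphEnergy [Fintype V] [DecidableEq V] (G : SimpleGraph V)
    [DecidableRel G.Adj] (f : V → ℝ) {x y : V} (hxy : G.Adj x y) :
    (f x - f y) ^ 2 ≤ graphEnergy G f f := by
  have hsub : ({(x, y), (y, x)} : Finset (V × V)) ⊆ Finset.univ := Finset.subset_univ _
  have h := Finset.sum_le_sum_of_subset_of_nonneg (f := fun p : V × V =>
    if G.Adj p.1 p.2 then (f p.1 - f p.2) * (f p.1 - f p.2) else 0) hsub (by
      intro p _ _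
      split_ifs
      · exact mul_self_nonneg _
      · exact le_rfl)
  rw [Finset.sum_pair (by simp [hxy.ne])] at h
  simp only [Fintype.sum_prod_type, hxy, hxy.symm, if_true] at h
  rw [graphEnergy]
  nlinarith [h]

theorem degree_pos_of_connected [Fintype V] {G : SimpleGraph V} [DecidableRel G.Adj]
    (hconn : G.Connected) (hcard : 2 ≤ Fintype.card V) (v : V) : 0 < G.degree v := by
  have : Nontrivial V := Fintype.one_lt_card_iff_nontrivial.1 hcard
  exact hconn.preconnected.degree_pos_of_nontrivial v

theorem two_le_sum_degree [Fintype V] {G : SimpleGraph V} [DecidableRel G.Adj]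
    (hconn : G.Connected) (hcard : 2 ≤ Fintype.card V) :
    2 ≤ ∑ v, (G.degree v : ℝ) := by
  have h : ∑ _v : V, (1 : ℝ) ≤ ∑ v, (G.degree v : ℝ) :=
    Finset.sum_le_sum fun v _ => by exact_mod_cast degree_pos_of_connected hconn hcard v
  have h2 : (2 : ℝ) ≤ Fintype.card V := by exact_mod_cast hcard
  simp only [Finset.sum_const, Finset.card_univ, nsmul_eq_mul, mul_one] at h
  linarith

/-- On a geodesic, every vertex of the graph has at most three neighbours. -/
theorem dist_succ_mul_le_three_mul_card [Fintype V] {G : SimpleGraph V} [DecidableRel G.Adj]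
    (hconn : G.Connected) {d : ℕ} (hd : ∀ v, d ≤ G.degree v) (x y : V) :
    (G.dist x y + 1) * d ≤ 3 * Fintype.card V := by
  have hex : ∀ i : ℕ, ∃ v, i ≤ G.dist x y → G.dist x v = i := by
    intro i
    obtain ⟨p, hp⟩ := hconn.exists_walk_length_eq_dist x y
    refine ⟨p.getVert i, fun hi => le_antisymm ?_ ?_⟩
    · refine (SimpleGraph.dist_le (p.take i)).trans ?_
      simp
    · have h1 := SimpleGraph.dist_le (p.drop i)
      have h2 := hconn.dist_triangle (u := x) (v := p.getVert i) (w := y)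
      rw [SimpleGraph.Walk.drop_length] at h1
      omega
  choose v hv using hex
  calc (G.dist x y + 1) * d = ∑ _i ∈ Finset.range (G.dist x y + 1), d := by simp
    _ ≤ ∑ i ∈ Finset.range (G.dist x y + 1), G.degree (v i) := Finset.sum_le_sum fun i _ => hd _
    _ = ∑ i ∈ Finset.range (G.dist x y + 1), ∑ w, if G.Adj (v i) w then 1 else 0 := by
        refine Finset.sum_congr rfl fun i _ => ?_
        rw [← G.card_neighborFinset_eq_degree, G.neighborFinset_eq_filter, Finset.card_filter]
    _ = ∑ w, ∑ i ∈ Finset.range (G.dist x y + 1), if G.Adj (v i) w then 1 else 0 :=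
        Finset.sum_comm
    _ ≤ ∑ _w : V, 3 := by
        refine Finset.sum_le_sum fun w _ => ?_
        rw [← Finset.card_filter]
        have hsub : {i ∈ Finset.range (G.dist x y + 1) | G.Adj (v i) w} ⊆
            Finset.Icc (G.dist x w - 1) (G.dist x w + 1) := by
          intro i hi
          rw [Finset.mem_filter, Finset.mem_range] at hi
          have h1 := hv i (by omega)
          have h2 := SimpleGraph.dist_eq_one_iff_adj.2 hi.2
          have h3 := hconn.dist_triangle (u := x) (v := v i) (w := w)
          have h4 := hconn.dist_triangle (u := x) (v := w) (w := v i)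
          rw [SimpleGraph.dist_comm (u := w)] at h4
          rw [Finset.mem_Icc]
          omega
        refine (Finset.card_le_card hsub).trans ?_
        rw [Nat.card_Icc]
        omega
    _ = 3 * Fintype.card V := by simp [mul_comm]

theorem sum_sum_mul_sq_sub [Fintype V] {pi f : V → ℝ} (h1 : ∑ x, pi x = 1)
    (h0 : ∑ x, pi x * f x = 0) :
    ∑ x, ∑ y, pi x * pi y * (f x - f y) ^ 2 = 2 * pip pi f f := by
  have hexp : ∀ x y, pi x * pi y * (f x - f y) ^ 2 =
      pi x * f x * f x * pi y + pi x * (pi y * f y * f y) - 2 * (pi x * f x) * (pi y * f y) := by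
    intro x y
    ring
  simp only [hexp, Finset.sum_sub_distrib, Finset.sum_add_distrib, ← Finset.mul_sum,
    ← Finset.sum_mul, h1, h0, pip]
  ring

section LazyWalk

variable [Fintype V] [DecidableEq V] (G : SimpleGraph V) [DecidableRel G.Adj]

theorem lazyP_nonneg (x y : V) : 0 ≤ lazyP G x y := by
  simp only [lazyP, Matrix.of_apply]
  split_ifs <;> positivity

theorem degree_mul_sub_lazyP_mulVec (f : V → ℝ) (u : V) (hu : 0 < G.degree u) :
    (G.degree u : ℝ) * (f u - (lazyP G).mulVec f u) = 1 / 2 * graphLap G f u := by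
  have hd : (0 : ℝ) < G.degree u := by exact_mod_cast hu
  have h1 : (lazyP G).mulVec f u =
      1 / 2 * f u + ∑ v, if G.Adj u v then 1 / (2 * (G.degree u : ℝ)) * f v else 0 := by
    have : ∀ v, lazyP G u v * f v = (if u = v then 1 / 2 * f v else 0) +
        if G.Adj u v then 1 / (2 * (G.degree u : ℝ)) * f v else 0 := by
      intro v
      by_cases h : u = v
      · subst h
        simp [lazyP]
      · simp [lazyP, h]
    simp only [Matrix.mulVec, dotProduct, this, Finset.sum_add_distrib]
    simp
  have h2 : graphLap G f u = G.degree u * f u - ∑ v, if G.Adj u v then f v else 0 := by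
    have : ∀ v, (if G.Adj u v then f u - f v else 0) =
        (if G.Adj u v then f u else 0) - if G.Adj u v then f v else 0 := by
      intro v
      split_ifs <;> simp
    simp only [graphLap, this, Finset.sum_sub_distrib]
    congr 1
    rw [← Finset.sum_filter, Finset.sum_const, nsmul_eq_mul, ← G.card_neighborFinset_eq_degree,
      G.neighborFinset_eq_filter]
  have h3 : (∑ v, if G.Adj u v then 1 / (2 * (G.degree u : ℝ)) * f v else 0) =
      1 / (2 * (G.degree u : ℝ)) * ∑ v, if G.Adj u v then f v else 0 := by
    simp only [Finset.mul_sum, mul_ite, mul_zero]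
  rw [h1, h2, h3]
  field_simp
  ring

variable {G}

/-- Minimum principle for functions superharmonic away from one vertex. -/
theorem nonneg_of_graphLap_nonneg (hconn : G.Connected) {f : V → ℝ} {x : V} (hx : 0 ≤ f x)
    (h : ∀ v, v ≠ x → 0 ≤ graphLap G f v) (v : V) : 0 ≤ f v := by
  have : Nonempty V := ⟨x⟩
  obtain ⟨m, hm⟩ := Finite.exists_min f
  have step : ∀ u, u ≠ x → f u = f m → ∀ w, G.Adj u w → f w = f m := by
    intro u hu hum w huw
    have hle : ∀ v ∈ Finset.univ, (if G.Adj u v then f u - f v else 0) ≤ 0 := by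
      intro v _
      split_ifs
      · linarith [hm v]
      · exact le_rfl
    have h0 := (Finset.sum_eq_zero_iff_of_nonpos hle).1
      (le_antisymm (Finset.sum_nonpos hle) (h u hu)) w (Finset.mem_univ _)
    rw [if_pos huw] at h0
    linarith
  have walk : ∀ u, G.Walk u x → f u = f m → f x = f m := by
    intro u p
    induction p with
    | nil => exact id
    | @cons a b c hab _ ih =>
      intro ha
      by_cases hax : a = c
      · rwa [hax] at ha
      · exact ih hx h step (step a hax ha b hab)
  obtain ⟨p⟩ := hconn.preconnected m x
  linarith [walk m p rfl, hm v]

theorem survProb_zero (P : Matrix V V ℝ) (x y : V) :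
    survProb P x y 0 = if y = x then 0 else 1 := by
  rw [survProb, Fintype.sum_equiv (Equiv.funUnique (Fin 1) V) _
    (fun a => if a = y ∧ a ≠ x then (1 : ℝ) else 0)]
  · by_cases h : y = x
    · rw [if_pos h]
      refine Finset.sum_eq_zero fun a _ => if_neg ?_
      rintro ⟨rfl, h'⟩
      exact h' h
    · rw [if_neg h, Finset.sum_eq_single y] <;> simp +contextual [h]
  · intro p
    simp [Fin.forall_fin_one]

theorem survProb_succ (P : Matrix V V ℝ) (x y : V) (t : ℕ) :
    survProb P x y (t + 1) = if y = x then 0 else ∑ z, P y z * survProb P x z t := by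
  have hR : ∑ z, P y z * survProb P x z t =
      ∑ q : Fin (t + 1) → V, if ∀ s, q s ≠ x then
        P y (q 0) * ∏ s : Fin t, P (q s.castSucc) (q s.succ) else 0 := by
    simp only [survProb, Finset.mul_sum]
    rw [Finset.sum_comm]
    refine Finset.sum_congr rfl fun q _ => ?_
    rw [Finset.sum_eq_single (q 0)]
    · by_cases h : ∀ s, q s ≠ x
      · simp [h]
      · simp only [h, and_false, if_false, mul_zero]
    · intro z _ hz
      simp [hz.symm]
    · simp
  rw [hR, survProb, ← Fintype.sum_equiv (Fin.consEquiv fun _ : Fin (t + 2) => V)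
    (fun aq : V × (Fin (t + 1) → V) => if aq.1 = y ∧ aq.1 ≠ x ∧ ∀ s, aq.2 s ≠ x then
      P aq.1 (aq.2 0) * ∏ s : Fin t, P (aq.2 s.castSucc) (aq.2 s.succ) else 0)]
  · rw [Fintype.sum_prod_type, Finset.sum_eq_single y]
    · by_cases h : y = x
      · simp [h]
      · simp [h]
    · intro a _ ha
      simp [ha]
    · simp
  · rintro ⟨a, q⟩
    rw [Fin.prod_univ_succ]
    simp only [Fin.consEquiv_apply, Fin.forall_fin_succ (n := t + 1), Fin.cons_zero,
      Fin.cons_succ, Fin.castSucc_zero, ← Fin.succ_castSucc]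

theorem survProb_nonneg (x y : V) (t : ℕ) : 0 ≤ survProb (lazyP G) x y t := by
  refine Finset.sum_nonneg fun p _ => ?_
  split_ifs
  · exact Finset.prod_nonneg fun s _ => lazyP_nonneg G _ _
  · exact le_rfl

theorem exists_graphLap_eq (hconn : G.Connected) (x : V) (g : V → ℝ) :
    ∃ f : V → ℝ, f x = 0 ∧ ∀ v, v ≠ x → graphLap G f v = g v := by
  let L : (V → ℝ) →ₗ[ℝ] (V → ℝ) :=
    { toFun := fun f v => if v = x then f x else graphLap G f v
      map_add' := by
        intro f g
        funext v
        simp only [Pi.add_apply, graphLap]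
        split_ifs
        · rfl
        · rw [← Finset.sum_add_distrib]
          refine Finset.sum_congr rfl fun w _ => ?_
          split_ifs <;> ring
      map_smul' := by
        intro c f
        funext v
        simp only [Pi.smul_apply, graphLap, smul_eq_mul, RingHom.id_apply]
        split_ifs
        · rfl
        · rw [Finset.mul_sum]
          refine Finset.sum_congr rfl fun w _ => ?_
          split_ifs <;> ring }
  have hL : ∀ f v, L f v = if v = x then f x else graphLap G f v := fun _ _ => rfl
  have nonneg : ∀ f, L f = 0 → ∀ v, 0 ≤ f v := by
    intro f hf
    refine nonneg_of_graphLap_nonneg hconn (x := x) ?_ fun v hv => ?_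
    · have := congrFun hf x
      simp only [hL, if_true, Pi.zero_apply] at this
      exact this.ge
    · have := congrFun hf v
      simp only [hL, if_neg hv, Pi.zero_apply] at this
      exact this.ge
  have inj : Function.Injective L := by
    rw [injective_iff_map_eq_zero]
    intro f hf
    funext v
    have h1 := nonneg f hf v
    have h2 := nonneg (-f) (by rw [map_neg, hf, neg_zero]) v
    simp only [Pi.neg_apply] at h2
    simp only [Pi.zero_apply]
    linarith
  obtain ⟨f, hf⟩ := LinearMap.surjective_of_injective inj fun v => if v = x then 0 else g v
  refine ⟨f, ?_, fun v hv => ?_⟩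
  · have := congrFun hf x
    simpa [hL] using this
  · have := congrFun hf v
    simpa [hL, hv] using this

theorem summable_survProb (hconn : G.Connected) (hcard : 2 ≤ Fintype.card V) (x y : V) :
    Summable (survProb (lazyP G) x y) := by
  obtain ⟨f, hfx, hf⟩ := exists_graphLap_eq hconn x fun v => 2 * (G.degree v : ℝ)
  have f_nonneg : ∀ v, 0 ≤ f v := nonneg_of_graphLap_nonneg hconn hfx.ge fun v hv => by
    rw [hf v hv]
    positivity
  have hrec : ∀ v, v ≠ x → f v = 1 + (lazyP G).mulVec f v := by
    intro v hv
    have hd := degree_pos_of_connected hconn hcard v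
    have hd' : (0 : ℝ) < G.degree v := by exact_mod_cast hd
    have h := degree_mul_sub_lazyP_mulVec G f v hd
    rw [hf v hv] at h
    have : f v - (lazyP G).mulVec f v = 1 := by
      apply mul_left_cancel₀ hd'.ne'
      linarith
    linarith
  have bound : ∀ T v, ∑ t ∈ Finset.range T, survProb (lazyP G) x v t ≤ f v := by
    intro T
    induction T with
    | zero => simpa using f_nonneg
    | succ T ih =>
      intro v
      rw [Finset.sum_range_succ']
      simp only [survProb_zero, survProb_succ]
      by_cases hv : v = x
      · simp [hv, hfx]
      · simp only [if_neg hv]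
        rw [Finset.sum_comm, hrec v hv, add_comm]
        refine add_le_add le_rfl (Finset.sum_le_sum fun z _ => ?_)
        rw [← Finset.mul_sum]
        exact mul_le_mul_of_nonneg_left (ih z) (lazyP_nonneg G v z)
  exact summable_of_sum_range_le (survProb_nonneg x y) fun T => bound T y

theorem Ehit_self (P : Matrix V V ℝ) (x : V) : Ehit P x x = 0 := by
  have : ∀ t, survProb P x x t = 0 := by
    rintro (_ | t)
    · simp [survProb_zero]
    · simp [survProb_succ]
  simp [Ehit, this]

theorem Ehit_of_ne (hconn : G.Connected) (hcard : 2 ≤ Fintype.card V) {x y : V} (hyx : y ≠ x) :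
    Ehit (lazyP G) x y = 1 + (lazyP G).mulVec (Ehit (lazyP G) x) y := by
  rw [Ehit, (summable_survProb hconn hcard x y).tsum_eq_zero_add]
  simp only [survProb_zero, survProb_succ, if_neg hyx]
  congr 1
  rw [Summable.tsum_finsetSum fun z _ => (summable_survProb hconn hcard x z).mul_left _]
  simp only [tsum_mul_left]
  rfl

theorem Ehit_nonneg (x y : V) : 0 ≤ Ehit (lazyP G) x y :=
  tsum_nonneg (survProb_nonneg x y)

theorem graphLap_Ehit (hconn : G.Connected) (hcard : 2 ≤ Fintype.card V) (x y : V) :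
    graphLap G (Ehit (lazyP G) x) y =
      2 * (G.degree y : ℝ) - if y = x then 2 * ∑ v, (G.degree v : ℝ) else 0 := by
  have hne : ∀ v, v ≠ x → graphLap G (Ehit (lazyP G) x) v = 2 * (G.degree v : ℝ) := by
    intro v hv
    have h := degree_mul_sub_lazyP_mulVec G (Ehit (lazyP G) x) v
      (degree_pos_of_connected hconn hcard v)
    rw [Ehit_of_ne hconn hcard hv] at h
    linarith
  by_cases hy : y = x
  · subst hy
    have h0 := sum_graphLap G (Ehit (lazyP G) y)
    rw [← Finset.add_sum_erase _ _ (Finset.mem_univ y)] at h0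
    rw [Finset.sum_congr rfl fun v hv => hne v (Finset.ne_of_mem_erase hv)] at h0
    have hS := Finset.add_sum_erase Finset.univ (fun v => 2 * (G.degree v : ℝ))
      (Finset.mem_univ y)
    rw [if_pos rfl, Finset.mul_sum]
    linarith
  · rw [hne y hy, if_neg hy, sub_zero]

theorem Ehit_triangle (hconn : G.Connected) (hcard : 2 ≤ Fintype.card V) (z y v : V) :
    Ehit (lazyP G) z v ≤ Ehit (lazyP G) y v + Ehit (lazyP G) z y := by
  have h := nonneg_of_graphLap_nonneg hconn (x := y)
    (f := fun w => Ehit (lazyP G) y w - (Ehit (lazyP G) z w - Ehit (lazyP G) z y))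
    (by simp [Ehit_self]) (fun w hw => by
      have hconst : graphLap G (fun _ : V => Ehit (lazyP G) z y) w = 0 := by simp [graphLap]
      have hS : 0 ≤ ∑ v, (G.degree v : ℝ) := Finset.sum_nonneg fun _ _ => Nat.cast_nonneg _
      rw [graphLap_sub, graphLap_sub, hconst, graphLap_Ehit hconn hcard,
        graphLap_Ehit hconn hcard, if_neg hw]
      split_ifs <;> linarith) v
  linarith

theorem graphEnergy_Ehit_sub (hconn : G.Connected) (hcard : 2 ≤ Fintype.card V) (f : V → ℝ)
    (x y : V) :
    graphEnergy G f (fun v => Ehit (lazyP G) y v - Ehit (lazyP G) x v) =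
      2 * (∑ v, (G.degree v : ℝ)) * (f x - f y) := by
  rw [← sum_mul_graphLap]
  simp only [graphLap_sub, graphLap_Ehit hconn hcard]
  have : ∀ u, f u * (2 * (G.degree u : ℝ) - (if u = y then 2 * ∑ v, (G.degree v : ℝ) else 0) -
      (2 * (G.degree u : ℝ) - if u = x then 2 * ∑ v, (G.degree v : ℝ) else 0)) =
      (if u = x then f u * (2 * ∑ v, (G.degree v : ℝ)) else 0) -
        if u = y then f u * (2 * ∑ v, (G.degree v : ℝ)) else 0 := by
    intro u
    split_ifs <;> ring
  simp only [this, Finset.sum_sub_distrib, Finset.sum_ite_eq', Finset.mem_univ, if_true]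
  ring

theorem graphEnergy_Ehit_sub_self (hconn : G.Connected) (hcard : 2 ≤ Fintype.card V) (x y : V) :
    graphEnergy G (fun v => Ehit (lazyP G) y v - Ehit (lazyP G) x v)
      (fun v => Ehit (lazyP G) y v - Ehit (lazyP G) x v) =
      2 * (∑ v, (G.degree v : ℝ)) * (Ehit (lazyP G) x y + Ehit (lazyP G) y x) := by
  rw [graphEnergy_Ehit_sub hconn hcard, Ehit_self, Ehit_self]
  ring

/-- The commute time controls squared differences of a function by its Dirichlet energy. -/
theorem sq_sub_le_commute_mul_graphEnergy (hconn : G.Connected) (hcard : 2 ≤ Fintype.card V)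
    (f : V → ℝ) (x y : V) :
    2 * (∑ v, (G.degree v : ℝ)) * (f x - f y) ^ 2 ≤
      (Ehit (lazyP G) x y + Ehit (lazyP G) y x) * graphEnergy G f f := by
  have h := graphEnergy_sq_le G f fun v => Ehit (lazyP G) y v - Ehit (lazyP G) x v
  rw [graphEnergy_Ehit_sub_self hconn hcard, graphEnergy_Ehit_sub hconn hcard] at h
  have hS := two_le_sum_degree hconn hcard
  refine le_of_mul_le_mul_left ?_ (show 0 < 2 * ∑ v, (G.degree v : ℝ) by linarith)
  linarith [h]

theorem commute_le_of_adj (hconn : G.Connected) (hcard : 2 ≤ Fintype.card V) {x y : V}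
    (hxy : G.Adj x y) :
    Ehit (lazyP G) x y + Ehit (lazyP G) y x ≤ 2 * ∑ v, (G.degree v : ℝ) := by
  have h := sq_sub_le_graphEnergy G (fun v => Ehit (lazyP G) y v - Ehit (lazyP G) x v) hxy
  rw [graphEnergy_Ehit_sub_self hconn hcard] at h
  simp only [Ehit_self] at h
  have h1 := Ehit_nonneg (G := G) x y
  have h2 := Ehit_nonneg (G := G) y x
  have hS := two_le_sum_degree hconn hcard
  by_contra! hlt
  nlinarith [mul_lt_mul_of_pos_right hlt
    (show 0 < Ehit (lazyP G) x y + Ehit (lazyP G) y x by linarith)]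

theorem commute_le_of_walk (hconn : G.Connected) (hcard : 2 ≤ Fintype.card V) {x y : V}
    (p : G.Walk x y) :
    Ehit (lazyP G) x y + Ehit (lazyP G) y x ≤ 2 * (∑ v, (G.degree v : ℝ)) * p.length := by
  induction p with
  | nil => simp [Ehit_self]
  | @cons a b c hab p ih =>
    have h := commute_le_of_adj hconn hcard hab
    have h1 := Ehit_triangle hconn hcard a b c
    have h2 := Ehit_triangle hconn hcard c b a
    rw [SimpleGraph.Walk.length_cons]
    push_cast
    linarith

theorem commute_le (hconn : G.Connected) (hcard : 2 ≤ Fintype.card V) [Nonempty V] (x y : V) :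
    Ehit (lazyP G) x y + Ehit (lazyP G) y x ≤
      6 * (davgR G / dminR G) * (Fintype.card V : ℝ) ^ 2 - 4 := by
  obtain ⟨u, -, hu⟩ := Finset.exists_mem_eq_inf' (Finset.univ_nonempty (α := V))
    fun v => (G.degree v : ℝ)
  have hmin : dminR G = G.degree u := hu
  have hle : ∀ v, G.degree u ≤ G.degree v := by
    intro v
    have : dminR G ≤ G.degree v := Finset.inf'_le _ (Finset.mem_univ v)
    rw [hmin] at this
    exact_mod_cast this
  obtain ⟨p, hp⟩ := hconn.exists_walk_length_eq_dist x y
  have h1 := commute_le_of_walk hconn hcard p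
  rw [hp] at h1
  have h2 : ((G.dist x y : ℝ) + 1) * G.degree u ≤ 3 * Fintype.card V := by
    exact_mod_cast dist_succ_mul_le_three_mul_card hconn hle x y
  have hd : (0 : ℝ) < G.degree u := by exact_mod_cast degree_pos_of_connected hconn hcard u
  have hn : (0 : ℝ) < Fintype.card V := by exact_mod_cast (by omega : 0 < Fintype.card V)
  have hS := two_le_sum_degree hconn hcard
  rw [← le_div_iff₀ hd] at h2
  have h3 : 6 * (davgR G / dminR G) * (Fintype.card V : ℝ) ^ 2 =
      2 * (∑ v, (G.degree v : ℝ)) * (3 * Fintype.card V / G.degree u) := by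
    rw [hmin, davgR]
    field_simp
    ring
  rw [h3]
  nlinarith [mul_le_mul_of_nonneg_left h2 (show 0 ≤ 2 * ∑ v, (G.degree v : ℝ) by linarith)]

theorem one_le_commute (hconn : G.Connected) (hcard : 2 ≤ Fintype.card V) {x y : V}
    (hxy : x ≠ y) : 1 ≤ Ehit (lazyP G) x y + Ehit (lazyP G) y x := by
  have h := (summable_survProb hconn hcard x y).le_tsum 0 fun t _ => survProb_nonneg x y t
  rw [survProb_zero, if_neg hxy.symm] at h
  exact le_add_of_le_of_nonneg h (Ehit_nonneg y x)

theorem sum_lazyPi (hconn : G.Connected) (hcard : 2 ≤ Fintype.card V) :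
    ∑ x, lazyPi G x = 1 := by
  have hS := two_le_sum_degree hconn hcard
  simp only [lazyPi, ← Finset.sum_div]
  exact div_self (by linarith)

theorem pip_sub_pip_lazyP (hconn : G.Connected) (hcard : 2 ≤ Fintype.card V) (f : V → ℝ) :
    2 * (∑ v, (G.degree v : ℝ)) *
      (pip (lazyPi G) f f - pip (lazyPi G) f ((lazyP G).mulVec f)) = graphEnergy G f f := by
  have hS := two_le_sum_degree hconn hcard
  rw [← sum_mul_graphLap, pip, pip, ← Finset.sum_sub_distrib, Finset.mul_sum]
  refine Finset.sum_congr rfl fun u _ => ?_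
  have h := degree_mul_sub_lazyP_mulVec G f u (degree_pos_of_connected hconn hcard u)
  have h' : graphLap G f u = 2 * ((G.degree u : ℝ) * (f u - (lazyP G).mulVec f u)) := by
    linarith
  have hS0 : (∑ v, (G.degree v : ℝ)) ≠ 0 := by linarith
  rw [h', lazyPi]
  field_simp

theorem secondEig_lazyP_le (hconn : G.Connected) (hcard : 2 ≤ Fintype.card V) {M : ℝ}
    (hM1 : 1 ≤ M) (hM : ∀ x y, Ehit (lazyP G) x y + Ehit (lazyP G) y x ≤ M) :
    secondEig (lazyPi G) (lazyP G) ≤ 1 - 1 / M := by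
  have hM0 : 0 < M := by linarith
  have hS := two_le_sum_degree hconn hcard
  have hpi : ∀ x, 0 ≤ lazyPi G x := fun x => by
    rw [lazyPi]
    positivity
  refine Real.sSup_le ?_ (sub_nonneg.2 ((div_le_one hM0).2 hM1))
  rintro r ⟨f, hf1, hf0, rfl⟩
  have hsum1 := sum_lazyPi hconn hcard
  have hE := pip_sub_pip_lazyP hconn hcard f
  have hvar := sum_sum_mul_sq_sub hsum1 hf0
  rw [hf1] at hE hvar
  set S := ∑ v, (G.degree v : ℝ)
  set q := pip (lazyPi G) f ((lazyP G).mulVec f)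
  have hpt : ∀ x y, (f x - f y) ^ 2 ≤ M * (1 - q) := by
    intro x y
    have h := sq_sub_le_commute_mul_graphEnergy hconn hcard f x y
    have h' := mul_le_mul_of_nonneg_right (hM x y) (graphEnergy_nonneg G f)
    refine le_of_mul_le_mul_left ?_ (show 0 < 2 * S by linarith)
    calc 2 * S * (f x - f y) ^ 2 ≤ M * graphEnergy G f f := h.trans h'
      _ = 2 * S * (M * (1 - q)) := by rw [← hE]; ring
  have hle : ∑ x, ∑ y, lazyPi G x * lazyPi G y * (f x - f y) ^ 2 ≤
      ∑ x, ∑ y, lazyPi G x * lazyPi G y * (M * (1 - q)) :=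
    Finset.sum_le_sum fun x _ => Finset.sum_le_sum fun y _ =>
      mul_le_mul_of_nonneg_left (hpt x y) (mul_nonneg (hpi x) (hpi y))
  simp only [← Finset.sum_mul, ← Finset.mul_sum, hsum1, hvar] at hle
  have : 1 / M ≤ 1 - q := by
    rw [div_le_iff₀ hM0]
    linarith
  linarith

end LazyWalk

theorem stmt15 [Fintype V] [Nonempty V] [DecidableEq V] (G : SimpleGraph V)
    [DecidableRel G.Adj] (hconn : G.Connected) (hcard : 2 ≤ Fintype.card V) :
    trelT (lazyPi G) (lazyP G) ≤
        (⨆ q : V × V, (Ehit (lazyP G) q.1 q.2 + Ehit (lazyP G) q.2 q.1)) ∧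
      (⨆ q : V × V, (Ehit (lazyP G) q.1 q.2 + Ehit (lazyP G) q.2 q.1)) ≤
        6 * (davgR G / dminR G) * (Fintype.card V : ℝ) ^ 2 - 4 := by
  refine ⟨?_, ciSup_le fun q => commute_le hconn hcard q.1 q.2⟩
  have hM : ∀ x y, Ehit (lazyP G) x y + Ehit (lazyP G) y x ≤
      ⨆ q : V × V, (Ehit (lazyP G) q.1 q.2 + Ehit (lazyP G) q.2 q.1) := fun x y =>
    le_ciSup (f := fun q : V × V => Ehit (lazyP G) q.1 q.2 + Ehit (lazyP G) q.2 q.1)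
      (Set.finite_range _).bddAbove (x, y)
  obtain ⟨x, y, hxy⟩ := Fintype.exists_pair_of_one_lt_card hcard
  have hM1 := (one_le_commute hconn hcard hxy).trans (hM x y)
  have h := secondEig_lazyP_le hconn hcard hM1 hM
  have hpos := one_div_pos.2 (zero_lt_one.trans_le hM1)
  exact (one_div_le (by linarith) (by linarith)).2 (by linarith)
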